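/- Let ξ be a state on ℓ^∞ invariant under the unit shift T_1. Then 𝓛(ξ) is a generalised limit, and for every nonincreasing sequence (μ_j)_{j≥1} of nonnegative reals with sup_k (log(1+k))^{−1} Σ_{j=1}^k μ_j < ∞, setting γ_k := (log(1+k))^{−1} Σ_{j=1}^k μ_j, one has 𝓛(ξ)({γ_{⌈k/2⌉}}_k) = 𝓛(ξ)({γ_k}_k). That is, 𝓛(ξ) belongs to the class DL_2. -/

import Mathlib

open Filter

/-- A bounded real sequence (an element of `ℓ^∞`). -/
def IsBddSeq (a : ℕ → ℝ) : Prop := ∃ C, ∀ k, |a k| ≤ C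

/-- A state on `ℓ^∞`: a positive linear functional with `ξ(1) = 1`
(linearity and positivity are required on bounded sequences). -/
def IsLinfState (ξ : (ℕ → ℝ) → ℝ) : Prop :=
  (∀ a b : ℕ → ℝ, IsBddSeq a → IsBddSeq b → ξ (a + b) = ξ a + ξ b) ∧
  (∀ (c : ℝ) (a : ℕ → ℝ), IsBddSeq a → ξ (c • a) = c * ξ a) ∧
  (∀ a : ℕ → ℝ, IsBddSeq a → (∀ k, 0 ≤ a k) → 0 ≤ ξ a) ∧
  ξ (fun _ => 1) = 1

/-- A generalised limit: a state on `ℓ^∞` with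
`liminf a ≤ ξ a ≤ limsup a` for every bounded nonnegative sequence. -/
def IsGenLim (ξ : (ℕ → ℝ) → ℝ) : Prop :=
  IsLinfState ξ ∧
  ∀ a : ℕ → ℝ, IsBddSeq a → (∀ k, 0 ≤ a k) →
    liminf a atTop ≤ ξ a ∧ ξ a ≤ limsup a atTop

/-- Invariance under the unit shift `T_1`. -/
def ShiftInv (ξ : (ℕ → ℝ) → ℝ) : Prop :=
  ∀ a : ℕ → ℝ, IsBddSeq a → ξ (fun k => a (k + 1)) = ξ a

/-- Invariance under the dilations `D_j`, `D_j(a)_k = a_{⌈k/j⌉}`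
(`⌈k/j⌉ = (k + j - 1)/j` in natural division). -/
def DilInv (ξ : (ℕ → ℝ) → ℝ) : Prop :=
  ∀ j : ℕ, 0 < j → ∀ a : ℕ → ℝ, IsBddSeq a →
    ξ (fun k => a ((k + j - 1) / j)) = ξ a

/-- The map `𝓛`: `𝓛(ξ)(a) := ξ({∫_{n−1}^{n} a_{⌊e^t⌋} dt}_n)`
(`ξ ∘ E ∘ L⁻¹ ∘ p` in the paper's notation). -/
noncomputable def calL (ξ : (ℕ → ℝ) → ℝ) : (ℕ → ℝ) → ℝ :=
  fun a => ξ (fun n => ∫ t in ((n : ℝ) - 1)..(n : ℝ), a ⌊Real.exp t⌋₊)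

/-- The sequence `γ_k = (log(1+k))⁻¹ Σ_{j=1}^k μ_j` associated to `(μ_j)_{j≥1}`. -/
noncomputable def gamSeq (μ : ℕ → ℝ) (k : ℕ) : ℝ :=
  (Real.log (1 + (k : ℝ)))⁻¹ * ∑ j ∈ Finset.Icc 1 k, μ j

/-- Membership in the class `DL_2`: a generalised limit `ω` with
`ω(D_2 γ) = ω(γ)` (i.e. `ω({γ_{⌈k/2⌉}}) = ω({γ_k})`, where `⌈k/2⌉ = (k+1)/2`
in natural division) for every `γ_k = (log(1+k))⁻¹ Σ_{j=1}^k μ_j` with `(μ_j)`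
nonincreasing, nonnegative and `sup_k (log(1+k))⁻¹ Σ_{j=1}^k μ_j < ∞`. -/
def IsDL2 (ω : (ℕ → ℝ) → ℝ) : Prop :=
  IsGenLim ω ∧
  ∀ μ : ℕ → ℝ, Antitone μ → (∀ j, 0 ≤ μ j) →
    (∃ C, ∀ k : ℕ, ∑ j ∈ Finset.Icc 1 k, μ j ≤ C * Real.log (1 + k)) →
    ω (fun k => gamSeq μ ((k + 1) / 2)) = ω (gamSeq μ)

/-! The increments of `γ` tend to `0`, so up to a null sequence the ceilings in `D_m` can be
replaced by floors. Since `⌊⌊eᵗ⌋ / m⌋ = ⌊e^(t - log m)⌋`, on the logarithmic scale the floor version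
of `D_m` is the translation by `log m`, and a translation changes the sequence of means over
`[n - 1, n]` by a coboundary `H n - H (n + 1)`, which a shift-invariant state annihilates. -/

open MeasureTheory Topology Asymptotics

namespace IsBddSeq

variable {a b : ℕ → ℝ}

theorem const (c : ℝ) : IsBddSeq fun _ => c := ⟨|c|, fun _ => le_rfl⟩

theorem comp (ha : IsBddSeq a) (f : ℕ → ℕ) : IsBddSeq fun k => a (f k) :=
  ha.imp fun _ hC k => hC (f k)

theorem add (ha : IsBddSeq a) (hb : IsBddSeq b) : IsBddSeq (a + b) := by
  obtain ⟨C, hC⟩ := ha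
  obtain ⟨D, hD⟩ := hb
  exact ⟨C + D, fun k => (abs_add_le _ _).trans (add_le_add (hC k) (hD k))⟩

theorem const_smul (ha : IsBddSeq a) (c : ℝ) : IsBddSeq (c • a) := by
  obtain ⟨C, hC⟩ := ha
  refine ⟨|c| * C, fun k => ?_⟩
  rw [Pi.smul_apply, smul_eq_mul, abs_mul]
  exact mul_le_mul_of_nonneg_left (hC k) (abs_nonneg c)

theorem sub (ha : IsBddSeq a) (hb : IsBddSeq b) : IsBddSeq (a - b) := by
  simpa only [neg_one_smul, sub_eq_add_neg] using ha.add (hb.const_smul (-1))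

theorem of_tendsto {c : ℝ} (h : Tendsto a atTop (𝓝 c)) : IsBddSeq a := by
  obtain ⟨C, hC⟩ := isBounded_iff_forall_norm_le.1 (Metric.isBounded_range_of_tendsto a h)
  exact ⟨C, fun k => hC _ ⟨k, rfl⟩⟩

theorem of_antitone (h : Antitone a) (h0 : ∀ k, 0 ≤ a k) : IsBddSeq a :=
  ⟨a 0, fun k => (abs_of_nonneg (h0 k)).trans_le (h k.zero_le)⟩

theorem isLittleO {f : ℕ → ℝ} (ha : IsBddSeq a) (hf : Tendsto f atTop atTop) :
    a =o[atTop] f := by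
  obtain ⟨C, hC⟩ := ha
  have ha_one : a =O[atTop] fun _ => (1 : ℝ) :=
    .of_bound C (.of_forall fun k => by simpa using hC k)
  exact ha_one.trans_isLittleO (isLittleO_one_left_iff ℝ |>.2 (tendsto_norm_atTop_atTop.comp hf))

end IsBddSeq

namespace IsLinfState

variable {ξ : (ℕ → ℝ) → ℝ} {a b : ℕ → ℝ}

theorem map_sub (hξ : IsLinfState ξ) (ha : IsBddSeq a) (hb : IsBddSeq b) :
    ξ (a - b) = ξ a - ξ b := by
  rw [sub_eq_add_neg, ← neg_one_smul ℝ b, hξ.1 _ _ ha (hb.const_smul (-1)), hξ.2.1 _ _ hb,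
    neg_one_mul, sub_eq_add_neg]

theorem map_const (hξ : IsLinfState ξ) (c : ℝ) : ξ (fun _ => c) = c := by
  simpa [Pi.smul_def, hξ.2.2.2] using hξ.2.1 c (fun _ => 1) (.const 1)

theorem map_le (hξ : IsLinfState ξ) (ha : IsBddSeq a) {M : ℝ} (h : ∀ k, a k ≤ M) : ξ a ≤ M := by
  have hnonneg := hξ.2.2.1 _ ((IsBddSeq.const M).sub ha) fun k => sub_nonneg.2 (h k)
  rwa [hξ.map_sub (.const M) ha, hξ.map_const, sub_nonneg] at hnonneg

theorem isGenLim_of_eventually_le (hξ : IsLinfState ξ)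
    (hle : ∀ a M, IsBddSeq a → (∀ᶠ k in atTop, a k ≤ M) → ξ a ≤ M) : IsGenLim ξ := by
  refine ⟨hξ, fun a ha h0 => ⟨le_of_forall_lt_imp_le_of_dense fun M hM => ?_,
    le_of_forall_gt_imp_ge_of_dense fun M hM => ?_⟩⟩
  · have hev : ∀ᶠ k in atTop, M < a k := eventually_lt_of_lt_liminf hM (isBoundedUnder_of ⟨0, h0⟩)
    have hneg : ξ ((-1 : ℝ) • a) ≤ -M :=
      hle _ _ (ha.const_smul (-1)) (hev.mono fun k hk => by simpa using hk.le)
    rw [hξ.2.1 _ _ ha] at hneg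
    linarith
  · obtain ⟨C, hC⟩ := ha
    have hev : ∀ᶠ k in atTop, a k < M :=
      eventually_lt_of_limsup_lt hM (isBoundedUnder_of ⟨C, fun k => (abs_le.1 (hC k)).2⟩)
    exact hle a M ⟨C, hC⟩ (hev.mono fun _ => le_of_lt)

end IsLinfState

namespace IsGenLim

variable {ω : (ℕ → ℝ) → ℝ} {a b : ℕ → ℝ}

theorem map_eq_of_tendsto (hω : IsGenLim ω) {c : ℝ} (h : Tendsto a atTop (𝓝 c)) : ω a = c := by
  obtain ⟨C, hC⟩ := IsBddSeq.of_tendsto h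
  -- `IsGenLim` only controls nonnegative sequences, so `a` is first raised by its bound.
  have hlim : Tendsto (a + fun _ => C) atTop (𝓝 (c + C)) := h.add_const C
  have hbounds := hω.2 _ (.of_tendsto hlim) fun k => by
    simpa only [Pi.add_apply] using neg_le_iff_add_nonneg.1 (abs_le.1 (hC k)).1
  rw [hlim.liminf_eq, hlim.limsup_eq, hω.1.1 _ _ ⟨C, hC⟩ (.const C), hω.1.map_const] at hbounds
  linarith

theorem map_eq_of_tendsto_sub (hω : IsGenLim ω) (ha : IsBddSeq a) (hb : IsBddSeq b)
    (h : Tendsto (a - b) atTop (𝓝 0)) : ω a = ω b := by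
  rw [← sub_eq_zero, ← hω.1.map_sub ha hb, hω.map_eq_of_tendsto h]

end IsGenLim

section UnitMean

/-- The map `E` of the paper: the sequence of means of `f` over the intervals `[n - 1, n]`. -/
noncomputable def unitMean (f : ℝ → ℝ) (n : ℕ) : ℝ := ∫ t in ((n : ℝ) - 1)..(n : ℝ), f t

variable {f : ℝ → ℝ} {C M : ℝ}

theorem isBddSeq_integral {u v : ℕ → ℝ} (hf : ∀ t, |f t| ≤ C) (huv : IsBddSeq (v - u)) :
    IsBddSeq fun n => ∫ t in u n..v n, f t := by
  obtain ⟨L, hL⟩ := huv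
  have hC : 0 ≤ C := (abs_nonneg _).trans (hf 0)
  refine ⟨C * L, fun n => ?_⟩
  calc ‖∫ t in u n..v n, f t‖ ≤ C * |v n - u n| :=
        intervalIntegral.norm_integral_le_of_norm_le_const fun t _ => hf t
    _ ≤ C * L := mul_le_mul_of_nonneg_left (hL n) hC

theorem isBddSeq_unitMean (hf : ∀ t, |f t| ≤ C) : IsBddSeq (unitMean f) :=
  isBddSeq_integral hf ⟨1, fun n => by simp⟩

theorem unitMean_le_of_eventually_le (hf : ∀ x y, IntervalIntegrable f volume x y)
    (hM : ∀ᶠ t in atTop, f t ≤ M) : ∀ᶠ n in atTop, unitMean f n ≤ M := by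
  obtain ⟨T, hT⟩ := eventually_atTop.1 hM
  filter_upwards [tendsto_natCast_atTop_atTop.eventually_ge_atTop (T + 1)] with n hn
  calc unitMean f n ≤ ∫ _ in ((n : ℝ) - 1)..(n : ℝ), M :=
        intervalIntegral.integral_mono_on (by linarith) (hf _ _) intervalIntegrable_const
          fun t ht => hT t (by linarith [ht.1])
    _ = M := by simp

end UnitMean

namespace ShiftInv

variable {ξ : (ℕ → ℝ) → ℝ} {b : ℕ → ℝ}

theorem map_comp_add_nat (hT : ShiftInv ξ) (hb : IsBddSeq b) (N : ℕ) :
    ξ (fun n => b (n + N)) = ξ b := by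
  induction N with
  | zero => rfl
  | succ N ih => simpa only [add_right_comm, add_assoc, ih] using hT _ (hb.comp (· + N))

theorem map_le_of_eventually_le (hT : ShiftInv ξ) (hξ : IsLinfState ξ) (hb : IsBddSeq b) {M : ℝ}
    (h : ∀ᶠ n in atTop, b n ≤ M) : ξ b ≤ M := by
  obtain ⟨N, hN⟩ := eventually_atTop.1 h
  rw [← hT.map_comp_add_nat hb N]
  exact hξ.map_le (hb.comp (· + N)) fun n => hN _ (Nat.le_add_left N n)

theorem map_unitMean_comp_sub_right (hT : ShiftInv ξ) (hξ : IsLinfState ξ) {f : ℝ → ℝ} {C : ℝ}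
    (hf : ∀ x y, IntervalIntegrable f volume x y) (hC : ∀ t, |f t| ≤ C) (s : ℝ) :
    ξ (unitMean fun t => f (t - s)) = ξ (unitMean f) := by
  set H : ℕ → ℝ := fun n => ∫ t in ((n : ℝ) - 1 - s)..((n : ℝ) - 1), f t
  have hH : IsBddSeq H := isBddSeq_integral hC ⟨|s|, fun n => by simp⟩
  have hcob : (unitMean fun t => f (t - s)) - unitMean f = H - fun n => H (n + 1) := by
    funext n
    simp only [Pi.sub_apply, unitMean, H, intervalIntegral.integral_comp_sub_right,
      Nat.cast_add_one, add_sub_cancel_right]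
    exact intervalIntegral.integral_interval_sub_interval_comm (hf _ _) (hf _ _) (hf _ _)
  rw [← sub_eq_zero, ← hξ.map_sub (isBddSeq_unitMean fun t => hC _) (isBddSeq_unitMean hC), hcob,
    hξ.map_sub hH (hH.comp _), hT H hH, sub_self]

end ShiftInv

section LogExtend

/-- The map `L⁻¹ ∘ p` of the paper: the extension of a sequence to a step function on `ℝ`, read on
the logarithmic scale, so that `calL ξ a` unfolds to `ξ (unitMean (logExtend a))`. -/
noncomputable def logExtend (a : ℕ → ℝ) (t : ℝ) : ℝ := a ⌊Real.exp t⌋₊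

variable {a : ℕ → ℝ}

theorem intervalIntegrable_logExtend (ha : IsBddSeq a) (x y : ℝ) :
    IntervalIntegrable (logExtend a) volume x y := by
  obtain ⟨C, hC⟩ := ha
  have hmeas : Measurable (logExtend a) :=
    (measurable_of_countable a).comp (Nat.measurable_floor.comp Real.measurable_exp)
  exact (intervalIntegrable_const (c := C)).mono_fun hmeas.aestronglyMeasurable
    (.of_forall fun t => (hC _).trans (le_abs_self C))

theorem isBddSeq_unitMean_logExtend (ha : IsBddSeq a) : IsBddSeq (unitMean (logExtend a)) := by
  obtain ⟨C, hC⟩ := ha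
  exact isBddSeq_unitMean fun t => hC _

theorem eventually_logExtend_le {M : ℝ} (h : ∀ᶠ k in atTop, a k ≤ M) :
    ∀ᶠ t in atTop, logExtend a t ≤ M :=
  (tendsto_nat_floor_atTop.comp Real.tendsto_exp_atTop).eventually h

theorem logExtend_comp_div {m : ℕ} (hm : m ≠ 0) :
    logExtend (fun k => a (k / m)) = fun t => logExtend a (t - Real.log m) := by
  funext t
  rw [logExtend, logExtend, Real.exp_sub, Real.exp_log (Nat.cast_pos.2 hm.pos),
    Nat.floor_div_natCast]

end LogExtend

section CalL

variable {ξ : (ℕ → ℝ) → ℝ} {a : ℕ → ℝ}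

theorem isLinfState_calL (hξ : IsLinfState ξ) : IsLinfState (calL ξ) := by
  refine ⟨fun a b ha hb => ?_, fun c a ha => ?_, fun a ha h0 => ?_, ?_⟩
  · have hadd : unitMean (logExtend (a + b)) = unitMean (logExtend a) + unitMean (logExtend b) :=
      funext fun n => intervalIntegral.integral_add (intervalIntegrable_logExtend ha _ _)
        (intervalIntegrable_logExtend hb _ _)
    exact (congrArg ξ hadd).trans
      (hξ.1 _ _ (isBddSeq_unitMean_logExtend ha) (isBddSeq_unitMean_logExtend hb))
  · have hsmul : unitMean (logExtend (c • a)) = c • unitMean (logExtend a) :=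
      funext fun n => intervalIntegral.integral_const_mul _ _
    exact (congrArg ξ hsmul).trans (hξ.2.1 _ _ (isBddSeq_unitMean_logExtend ha))
  · exact hξ.2.2.1 _ (isBddSeq_unitMean_logExtend ha) fun n =>
      intervalIntegral.integral_nonneg (by linarith) fun t _ => h0 _
  · have hone : unitMean (logExtend fun _ => 1) = fun _ => 1 := by
      funext n
      simp [unitMean, logExtend]
    exact (congrArg ξ hone).trans hξ.2.2.2

theorem isGenLim_calL (hξ : IsLinfState ξ) (hT : ShiftInv ξ) : IsGenLim (calL ξ) :=
  (isLinfState_calL hξ).isGenLim_of_eventually_le fun _ _ ha hM =>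
    hT.map_le_of_eventually_le hξ (isBddSeq_unitMean_logExtend ha)
      (unitMean_le_of_eventually_le (intervalIntegrable_logExtend ha) (eventually_logExtend_le hM))

theorem calL_comp_div (hξ : IsLinfState ξ) (hT : ShiftInv ξ) (ha : IsBddSeq a) {m : ℕ}
    (hm : m ≠ 0) : calL ξ (fun k => a (k / m)) = calL ξ a := by
  obtain ⟨C, hC⟩ := ha
  exact (congrArg (fun f => ξ (unitMean f)) (logExtend_comp_div hm)).trans
    (hT.map_unitMean_comp_sub_right hξ (intervalIntegrable_logExtend ⟨C, hC⟩) (fun t => hC _) _)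

theorem tendsto_comp_ceilDiv_sub_comp_div {m : ℕ} (hm : m ≠ 0)
    (h : Tendsto (fun k => a (k + 1) - a k) atTop (𝓝 0)) :
    Tendsto (fun k => a ((k + m - 1) / m) - a (k / m)) atTop (𝓝 0) := by
  have hfloor : Tendsto (fun k => ‖a (k / m + 1) - a (k / m)‖) atTop (𝓝 0) := by
    simpa using (h.comp (Nat.tendsto_div_const_atTop hm)).norm
  refine squeeze_zero_norm (fun k => ?_) hfloor
  have hceil : (k + m - 1) / m = k / m ∨ (k + m - 1) / m = k / m + 1 := by
    have hle : (k + m - 1) / m ≤ k / m + 1 :=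
      (Nat.div_le_div_right (Nat.sub_le _ 1)).trans_eq (Nat.add_div_right k hm.pos)
    have hge : k / m ≤ (k + m - 1) / m := Nat.div_le_div_right (by omega)
    omega
  rcases hceil with h_eq | h_eq <;> simp [h_eq]

theorem calL_comp_ceilDiv (hξ : IsLinfState ξ) (hT : ShiftInv ξ) (ha : IsBddSeq a)
    (h : Tendsto (fun k => a (k + 1) - a k) atTop (𝓝 0)) {m : ℕ} (hm : m ≠ 0) :
    calL ξ (fun k => a ((k + m - 1) / m)) = calL ξ a :=
  ((isGenLim_calL hξ hT).map_eq_of_tendsto_sub (ha.comp _) (ha.comp _)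
    (tendsto_comp_ceilDiv_sub_comp_div hm h)).trans (calL_comp_div hξ hT ha hm)

end CalL

section GamSeq

variable {μ : ℕ → ℝ}

theorem tendsto_log_one_add_natCast_atTop :
    Tendsto (fun k : ℕ => Real.log (1 + k)) atTop atTop :=
  Real.tendsto_log_atTop.comp (tendsto_atTop_add_const_left _ _ tendsto_natCast_atTop_atTop)

theorem log_mul_gamSeq (k : ℕ) :
    Real.log (1 + k) * gamSeq μ k = ∑ j ∈ Finset.Icc 1 k, μ j := by
  rcases k.eq_zero_or_pos with rfl | hk
  · simp
  · have hlog : 0 < Real.log (1 + k) := Real.log_pos (by simpa using hk)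
    exact mul_inv_cancel_left₀ hlog.ne' _

theorem isBddSeq_gamSeq (hμ : ∀ j, 0 ≤ μ j) {C : ℝ}
    (hC : ∀ k : ℕ, ∑ j ∈ Finset.Icc 1 k, μ j ≤ C * Real.log (1 + k)) : IsBddSeq (gamSeq μ) := by
  refine ⟨|C|, fun k => ?_⟩
  have hlog : 0 ≤ Real.log (1 + k) := Real.log_nonneg (by simp)
  rw [gamSeq, abs_of_nonneg (mul_nonneg (inv_nonneg.2 hlog) (Finset.sum_nonneg fun j _ => hμ j))]
  refine inv_mul_le_of_le_mul₀ hlog (abs_nonneg C) ((hC k).trans ?_)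
  rw [mul_comm]
  exact mul_le_mul_of_nonneg_left (le_abs_self C) hlog

theorem gamSeq_succ_sub (k : ℕ) :
    gamSeq μ (k + 1) - gamSeq μ k = μ (k + 1) / Real.log (1 + (k + 1 : ℕ)) -
      gamSeq μ k * ((Real.log (1 + (k + 1 : ℕ)) - Real.log (1 + k)) /
        Real.log (1 + (k + 1 : ℕ))) := by
  have hlog : 0 < Real.log (1 + (k + 1 : ℕ)) := Real.log_pos (by push_cast; linarith)
  have hsum : Real.log (1 + (k + 1 : ℕ)) * gamSeq μ (k + 1) =
      Real.log (1 + k) * gamSeq μ k + μ (k + 1) := by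
    rw [log_mul_gamSeq, log_mul_gamSeq, Finset.sum_Icc_succ_top (Nat.le_add_left 1 k)]
  field_simp
  linear_combination hsum

theorem tendsto_gamSeq_succ_sub (hμ : μ =o[atTop] fun k : ℕ => Real.log (1 + k))
    (hγ : IsBddSeq (gamSeq μ)) :
    Tendsto (fun k => gamSeq μ (k + 1) - gamSeq μ k) atTop (𝓝 0) := by
  obtain ⟨C, hC⟩ := hγ
  have hratio : Tendsto (fun k => μ (k + 1) / Real.log (1 + (k + 1 : ℕ))) atTop (𝓝 0) :=
    hμ.tendsto_div_nhds_zero.comp (tendsto_add_atTop_nat 1)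
  have hlog_diff : Tendsto (fun k : ℕ => Real.log (1 + (k + 1 : ℕ)) - Real.log (1 + k))
      atTop (𝓝 0) := by
    simpa [Function.comp_def, add_comm] using
      Real.tendsto_log_nat_add_one_sub_log.comp (tendsto_add_atTop_nat 1)
  have hlog_ratio := hlog_diff.div_atTop
    (tendsto_log_one_add_natCast_atTop.comp (tendsto_add_atTop_nat 1))
  have hproduct := isBoundedUnder_le_mul_tendsto_zero (isBoundedUnder_of ⟨C, hC⟩) hlog_ratio
  simpa only [gamSeq_succ_sub, sub_zero, Function.comp_apply] using hratio.sub hproduct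

end GamSeq

theorem calL_mem_DL2_general (ξ : (ℕ → ℝ) → ℝ) (hst : IsLinfState ξ) (hT : ShiftInv ξ) :
    IsGenLim (calL ξ) ∧ ∀ m : ℕ, m ≠ 0 → ∀ μ : ℕ → ℝ,
      (μ =o[atTop] fun k : ℕ => Real.log (1 + k)) → IsBddSeq (gamSeq μ) →
        calL ξ (fun k => gamSeq μ ((k + m - 1) / m)) = calL ξ (gamSeq μ) :=
  ⟨isGenLim_calL hst hT, fun _ hm _ hμ hγ =>
    calL_comp_ceilDiv hst hT hγ (tendsto_gamSeq_succ_sub hμ hγ) hm⟩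

/-- if `ξ` is a state on `ℓ^∞` invariant under the unit shift `T_1`,
then `𝓛(ξ)` is a generalised limit and `𝓛(ξ)(D_2 γ) = 𝓛(ξ)(γ)` for every sequence
`γ_k = (log(1+k))⁻¹ Σ_{j=1}^k μ_j` with `(μ_j)` nonincreasing nonnegative and
`sup_k (log(1+k))⁻¹ Σ_{j=1}^k μ_j < ∞`; that is, `𝓛(ξ) ∈ DL_2`. -/
theorem calL_mem_DL2
    (ξ : (ℕ → ℝ) → ℝ) (hst : IsLinfState ξ) (hT : ShiftInv ξ) :
    IsDL2 (calL ξ) := by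
  obtain ⟨hlim, hdil⟩ := calL_mem_DL2_general ξ hst hT
  exact ⟨hlim, fun μ hanti hμ ⟨_, hC⟩ => hdil 2 two_ne_zero μ
    ((IsBddSeq.of_antitone hanti hμ).isLittleO tendsto_log_one_add_natCast_atTop)
    (isBddSeq_gamSeq hμ hC)⟩
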